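/- There exist absolute constants 0 < c ≤ C such that for every integer p ≥ 2 and every integer k > k_0, where k_0 = log*_e p − 1, c · p · (k − k_0)^{1 − 1/p} ≤ bell_k(p)^{1/p} ≤ C · p · (k − k_0)^{1 − 1/p}. (Equivalently, bell_k(p)^{1/p} = Θ(p · min(k^{1−1/p}, k − k_0)) in this range.) -/

import Mathlib

/-- `Q` is a refinement of `P`: every part of `Q` is contained in some part of `P`. -/
def FPRefines {p : ℕ} (Q P : Finpartition (Finset.univ : Finset (Fin p))) : Prop :=
  ∀ a ∈ Q.parts, ∃ b ∈ P.parts, a ⊆ b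

/-- `f = (T_1, …, T_k)` is a `k`-level (hierarchical) partition of `[p]`: each `T_{i+1}`
is a refinement of `T_i`. -/
def IsKLevel {p : ℕ} (k : ℕ)
    (f : Fin k → Finpartition (Finset.univ : Finset (Fin p))) : Prop :=
  ∀ (i : ℕ) (h : i + 1 < k), FPRefines (f ⟨i + 1, h⟩) (f ⟨i, Nat.lt_of_succ_lt h⟩)

/-- The order-`k` Bell number `bell_k(p)`: the number of `k`-level hierarchical partitions
of `[p]` (so `bell_0(p) = 1`). -/
noncomputable def bellk (k p : ℕ) : ℕ :=
  Nat.card {f : Fin k → Finpartition (Finset.univ : Finset (Fin p)) // IsKLevel k f}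

/-- The `k`-fold iterated natural logarithm, `log^{(0)} x = x`. -/
noncomputable def iterLog (k : ℕ) (x : ℝ) : ℝ := Real.log^[k] x

/-- `log* x`: the smallest `k ≥ 0` such that `log^{(k)} x ≤ 1`. -/
noncomputable def logStar (x : ℝ) : ℕ := sInf {k : ℕ | iterLog k x ≤ 1}

/-!
Splitting off the coarsest class of a marked element shows that the exponential generating
functions `B_k` satisfy `B_{k+1}' = B_k' B_{k+1}`, so that `B_k` is the `(k+1)`-st iterate of
`x ↦ eˣ - 1`, plus `1`. Write `k = n + N` with `n = log* p - 1`.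

Upper bound: a coefficient is at most the value at `x` divided by `x ^ p`. At `x = 1 / (2N)` the
first `N` iterations only double `x`, since `x ↦ eˣ - 1` is dominated by `x ↦ x / (1 - x)`. By
convexity the remaining `n + 1` iterations keep the factor `1 / N` and multiply it by at most a
tower of height `n + 1`, which is at most `eᵖ`.

Lower bound: for `p ≤ N` merge one pair of classes at a time. For larger `p`, the coarsest level
may consist of `p / m` classes of size `m ≈ log² p`, each carrying a hierarchy with one level
fewer. Such a step costs a factor `exp (O(1 / log p))` per element and turns `p` into roughly
`log² p`, so that `n` steps suffice and the exponents add up like a geometric series.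
-/

open Finset Function Polynomial PowerSeries Real
open scoped Nat

/-! ### Hierarchical partitions as chains of equivalence relations -/

section Chains

variable {α β : Type*} {k : ℕ} {s : Set α}

/-- The number of `k`-level hierarchical partitions of a type, a level being encoded by its
equivalence relation. Levels are listed from the finest (index `0`) to the coarsest, opposite to
`IsKLevel`, so that a hierarchy is a monotone map. -/
noncomputable def hierarchyCount (k : ℕ) (α : Type*) : ℕ :=
  Nat.card (Fin k →o Setoid α)

theorem isKLevel_iff_antitone {p : ℕ} {f : Fin k → Finpartition (univ : Finset (Fin p))} :
    IsKLevel k f ↔ Antitone f := by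
  cases k with
  | zero => exact ⟨fun _ i => i.elim0, fun _ i h => absurd h (by lia)⟩
  | succ k =>
    rw [Fin.antitone_iff_succ_le]
    exact ⟨fun h i => h i (by lia), fun h i hi => h ⟨i, by lia⟩⟩

theorem ker_part_le_ker_part_iff [Fintype α] [DecidableEq α]
    {P Q : Finpartition (univ : Finset α)} :
    Setoid.ker P.part ≤ Setoid.ker Q.part ↔ P ≤ Q := by
  constructor
  · intro h t ht
    obtain ⟨a, ha⟩ := P.nonempty_of_mem_parts ht
    refine ⟨Q.part a, Q.part_mem.2 (mem_univ a), fun b hb => ?_⟩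
    have hab : P.part b = P.part a := by rw [P.part_eq_of_mem ht ha, P.part_eq_of_mem ht hb]
    exact (Q.mem_part_iff_part_eq_part (mem_univ b) (mem_univ a)).2 (h hab)
  · intro h a b hab
    obtain ⟨t, ht, hat⟩ := h (P.part_mem.2 (mem_univ a))
    have ha : a ∈ P.part a := P.mem_part_self.2 (mem_univ a)
    have hb : b ∈ P.part a := (P.mem_part_iff_part_eq_part (mem_univ b) (mem_univ a)).2 hab.symm
    rw [Setoid.ker_def, Q.part_eq_of_mem ht (hat ha), Q.part_eq_of_mem ht (hat hb)]

theorem ker_part_surjective [Fintype α] [DecidableEq α] :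
    Surjective fun P : Finpartition (univ : Finset α) => Setoid.ker P.part := by
  classical
  refine fun r => ⟨Finpartition.ofSetoid r, ?_⟩
  ext a b
  rw [Setoid.ker_def, eq_comm,
    ← Finpartition.mem_part_iff_part_eq_part _ (mem_univ b) (mem_univ a),
    Finpartition.mem_part_ofSetoid_iff_rel]

/-- The order isomorphism between finite partitions of a type and its equivalence relations. -/
noncomputable def finpartitionOrderIsoSetoid [Fintype α] [DecidableEq α] :
    Finpartition (univ : Finset α) ≃o Setoid α :=
  RelIso.ofSurjective
    (OrderEmbedding.ofMapLEIff (fun P => Setoid.ker P.part) fun _ _ => ker_part_le_ker_part_iff)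
    ker_part_surjective

theorem bellk_eq_hierarchyCount (k p : ℕ) : bellk k p = hierarchyCount k (Fin p) := by
  let e := finpartitionOrderIsoSetoid (α := Fin p)
  refine Nat.card_congr
    { toFun f := ⟨e ∘ f.1 ∘ Fin.rev,
        e.monotone.comp ((isKLevel_iff_antitone.1 f.2).comp Fin.rev_anti)⟩
      invFun T := ⟨e.symm ∘ T ∘ Fin.rev,
        isKLevel_iff_antitone.2 ((e.symm.monotone.comp T.monotone).comp_antitone Fin.rev_anti)⟩
      left_inv f := by ext1; funext i; simp
      right_inv T := by ext1; funext i; simp }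

/-- `Setoid.comap` as a monotone map. -/
def comapHom (f : α → β) : Setoid β →o Setoid α :=
  ⟨Setoid.comap f, fun _ _ h _ _ hxy => h hxy⟩

/-- The order isomorphism between the equivalence relations on equivalent types. -/
def setoidCongr (e : α ≃ β) : Setoid α ≃o Setoid β :=
  Equiv.toOrderIso
    { toFun := Setoid.comap e.symm
      invFun := Setoid.comap e
      left_inv r := by ext; simp [Setoid.comap_rel]
      right_inv r := by ext; simp [Setoid.comap_rel] }
    (comapHom e.symm).monotone (comapHom e).monotone

theorem hierarchyCount_eq_bellk [Finite α] (k : ℕ) :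
    hierarchyCount k α = bellk k (Nat.card α) :=
  (Nat.card_congr ((OrderIso.refl _).arrowCongr (setoidCongr (Finite.equivFin α))).toEquiv).trans
    (bellk_eq_hierarchyCount k _).symm

instance finite_setoid [Finite α] : Finite (Setoid α) :=
  Finite.of_injective _ fun _ _ => Setoid.eq_iff_rel_eq.2

instance finite_hierarchies [Finite α] : Finite (Fin k →o Setoid α) :=
  DFunLike.finite _

theorem bellk_pos (k p : ℕ) : 0 < bellk k p := by
  rw [bellk_eq_hierarchyCount]
  have : Nonempty (Fin k →o Setoid (Fin p)) := ⟨OrderHom.const _ ⊤⟩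
  exact Nat.card_pos

theorem bellk_zero_left (p : ℕ) : bellk 0 p = 1 := by
  rw [bellk_eq_hierarchyCount]
  exact Nat.card_eq_one_iff_unique.2
    ⟨⟨fun T U => OrderHom.ext _ _ (Subsingleton.elim _ _)⟩, ⟨OrderHom.const _ ⊤⟩⟩

theorem bellk_zero_right (k : ℕ) : bellk k 0 = 1 := by
  rw [bellk_eq_hierarchyCount]
  exact Nat.card_eq_one_iff_unique.2
    ⟨⟨fun T U => OrderHom.ext _ _ (funext fun i => Setoid.ext fun x => x.elim0)⟩,
      ⟨OrderHom.const _ ⊤⟩⟩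

/-- The equivalence relation on `α` restricting to `U` on `s` and to `V` on `sᶜ`, and relating no
element of `s` to one of `sᶜ`. -/
def glueSetoid (U : Setoid s) (V : Setoid ↥sᶜ) : Setoid α where
  r x y := (∃ hx hy, U ⟨x, hx⟩ ⟨y, hy⟩) ∨ ∃ hx hy, V ⟨x, hx⟩ ⟨y, hy⟩
  iseqv := by
    refine ⟨fun x => ?_, ?_, ?_⟩
    · by_cases hx : x ∈ s
      · exact Or.inl ⟨hx, hx, U.refl _⟩
      · exact Or.inr ⟨hx, hx, V.refl _⟩
    · rintro x y (⟨hx, hy, h⟩ | ⟨hx, hy, h⟩)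
      · exact Or.inl ⟨hy, hx, U.symm h⟩
      · exact Or.inr ⟨hy, hx, V.symm h⟩
    · rintro x y z (⟨hx, hy, h⟩ | ⟨hx, hy, h⟩) (⟨hy', hz, h'⟩ | ⟨hy', hz, h'⟩)
      · exact Or.inl ⟨hx, hz, U.trans h h'⟩
      · exact absurd hy hy'
      · exact absurd hy' hy
      · exact Or.inr ⟨hx, hz, V.trans h h'⟩

theorem glueSetoid_apply {U : Setoid s} {V : Setoid ↥sᶜ} {x y : α} :
    glueSetoid U V x y ↔ (∃ hx hy, U ⟨x, hx⟩ ⟨y, hy⟩) ∨ ∃ hx hy, V ⟨x, hx⟩ ⟨y, hy⟩ :=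
  Iff.rfl

theorem glueSetoid_mono {U U' : Setoid s} {V V' : Setoid ↥sᶜ} (hU : U ≤ U') (hV : V ≤ V') :
    glueSetoid U V ≤ glueSetoid U' V' := by
  rintro x y (⟨hx, hy, h⟩ | ⟨hx, hy, h⟩)
  · exact Or.inl ⟨hx, hy, hU h⟩
  · exact Or.inr ⟨hx, hy, hV h⟩

theorem comap_val_glueSetoid_left (U : Setoid s) (V : Setoid ↥sᶜ) :
    (glueSetoid U V).comap Subtype.val = U := by
  ext x y
  simp [Setoid.comap_rel, glueSetoid_apply]

theorem comap_val_glueSetoid_right (U : Setoid s) (V : Setoid ↥sᶜ) :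
    (glueSetoid U V).comap Subtype.val = V := by
  ext ⟨x, hx⟩ ⟨y, hy⟩
  simp [Setoid.comap_rel, glueSetoid_apply, show x ∉ s from hx, show y ∉ s from hy]

theorem glueSetoid_comap_val {r : Setoid α} (h : r ≤ Setoid.ker (· ∈ s)) :
    glueSetoid (s := s) (r.comap Subtype.val) (r.comap Subtype.val) = r := by
  ext x y
  simp only [glueSetoid_apply, Setoid.comap_rel]
  refine ⟨by rintro (⟨_, _, hxy⟩ | ⟨_, _, hxy⟩) <;> exact hxy, fun hxy => ?_⟩
  have hs : (x ∈ s) = (y ∈ s) := h hxy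
  by_cases hx : x ∈ s
  · exact Or.inl ⟨hx, hs.mp hx, hxy⟩
  · exact Or.inr ⟨hx, hx ∘ hs.mpr, hxy⟩

theorem le_ker_mem_class (r : Setoid α) (a : α) : r ≤ Setoid.ker (· ∈ {x | r a x}) :=
  fun _ _ hxy => propext ⟨fun h => r.trans h hxy, fun h => r.trans h (r.symm hxy)⟩

theorem comap_val_class_eq_top (r : Setoid α) (a : α) :
    r.comap (Subtype.val : {x | r a x} → α) = ⊤ :=
  Setoid.eq_top_iff.2 fun x y => r.trans (r.symm x.2) y.2

theorem class_glueSetoid_top {a : α} (ha : a ∈ s) (V : Setoid ↥sᶜ) :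
    {x | glueSetoid ⊤ V a x} = s := by
  ext x
  simp [glueSetoid_apply, ha, Setoid.top_def]

/-- The chain `U` extended by `⊤` at its end. -/
def snocTop {γ : Type*} [Preorder γ] [OrderTop γ] (U : Fin k →o γ) : Fin (k + 1) →o γ where
  toFun := Fin.snoc U ⊤
  monotone' i j hij := by
    induction j using Fin.lastCases with
    | last => simp
    | cast j =>
      induction i using Fin.lastCases with
      | last => exact absurd hij (by simp)
      | cast i => simpa using U.monotone hij

theorem snocTop_last {γ : Type*} [Preorder γ] [OrderTop γ] (U : Fin k →o γ) :
    snocTop U (Fin.last k) = ⊤ :=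
  Fin.snoc_last (α := fun _ => γ) ..

theorem snocTop_castSucc {γ : Type*} [Preorder γ] [OrderTop γ] (U : Fin k →o γ) (i : Fin k) :
    snocTop U i.castSucc = U i :=
  Fin.snoc_castSucc (α := fun _ => γ) ..

/-- A hierarchy in which `s` is the coarsest class of `a` amounts to a hierarchy on `s`, whose
coarsest level is trivial and is left out, and a hierarchy on `sᶜ`. -/
def hierarchyEquivOfClass {a : α} (ha : a ∈ s) :
    {T : Fin (k + 1) →o Setoid α // {x | T (Fin.last k) a x} = s} ≃
      (Fin k →o Setoid s) × (Fin (k + 1) →o Setoid ↥sᶜ) where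
  toFun T := ((comapHom Subtype.val).comp (T.1.comp Fin.castSuccOrderEmb.toOrderHom),
    (comapHom Subtype.val).comp T.1)
  invFun UV := ⟨⟨fun i => glueSetoid (snocTop UV.1 i) (UV.2 i), fun _ _ h =>
      glueSetoid_mono ((snocTop UV.1).monotone h) (UV.2.monotone h)⟩,
    (congrArg (fun r => {x | glueSetoid r (UV.2 (Fin.last k)) a x}) (snocTop_last UV.1)).trans
      (class_glueSetoid_top ha _)⟩
  left_inv := by
    rintro ⟨T, rfl⟩
    refine Subtype.ext (OrderHom.ext _ _ (funext fun i => ?_))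
    refine Eq.trans (congrArg (glueSetoid · _) ?_) (glueSetoid_comap_val
      ((T.monotone (Fin.le_last i)).trans (le_ker_mem_class (T (Fin.last k)) a)))
    induction i using Fin.lastCases with
    | last => exact (snocTop_last _).trans (comap_val_class_eq_top _ a).symm
    | cast i => exact snocTop_castSucc _ i
  right_inv UV := by
    ext1 <;> ext1 <;> funext i
    · exact (comap_val_glueSetoid_left _ _).trans (snocTop_castSucc UV.1 i)
    · exact comap_val_glueSetoid_right _ _

theorem hierarchyCount_succ [Fintype α] [DecidableEq α] (k : ℕ) (a : α) :
    hierarchyCount (k + 1) α =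
      ∑ s : Finset α with a ∈ s, bellk k #s * bellk (k + 1) (Fintype.card α - #s) := by
  classical
  let f (T : Fin (k + 1) →o Setoid α) : Finset α := {x | T (Fin.last k) a x}
  rw [hierarchyCount, ← Nat.card_congr (Equiv.sigmaFiberEquiv f), Nat.card_sigma, sum_filter]
  refine sum_congr rfl fun s _ => ?_
  have hf (T) : f T = s ↔ {x | T (Fin.last k) a x} = (s : Set α) := by simp [f, ← coe_inj]
  rw [Nat.card_congr (Equiv.subtypeEquivRight hf)]
  split_ifs with ha
  · rw [Nat.card_congr (hierarchyEquivOfClass (mem_coe.2 ha)), Nat.card_prod,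
      ← hierarchyCount, ← hierarchyCount, hierarchyCount_eq_bellk, hierarchyCount_eq_bellk]
    congr 2
    · simp
    · simp [← coe_compl]
  · exact @Nat.card_of_isEmpty _ ⟨fun T => ha (mem_coe.1 (T.2 ▸ (T.1 _).refl a))⟩

theorem bellk_succ_succ (k n : ℕ) : bellk (k + 1) (n + 1) =
    ∑ i ∈ range (n + 1), n.choose i * (bellk k (i + 1) * bellk (k + 1) (n - i)) := by
  have h0 : (0 : Fin (n + 1)) ∉ univ.erase (0 : Fin (n + 1)) := notMem_erase _ _
  rw [bellk_eq_hierarchyCount, hierarchyCount_succ k (0 : Fin (n + 1)), sum_filter,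
    ← powerset_univ, ← insert_erase (mem_univ (0 : Fin (n + 1))), sum_powerset_insert h0,
    sum_eq_zero fun t ht => if_neg (notMem_mono (mem_powerset.1 ht) h0), zero_add]
  calc ∑ t ∈ (univ.erase (0 : Fin (n + 1))).powerset, _
      = ∑ t ∈ (univ.erase (0 : Fin (n + 1))).powerset,
          bellk k (#t + 1) * bellk (k + 1) (n - #t) := sum_congr rfl fun t ht => by
        simp [card_insert_of_notMem (notMem_mono (mem_powerset.1 ht) h0)]
    _ = _ := by
      rw [sum_powerset_apply_card fun i => bellk k (i + 1) * bellk (k + 1) (n - i)]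
      simp

end Chains

/-! ### The exponential generating function -/

/-- The coefficient `bell_k(n) / n!` of the exponential generating function of `bell_k`. -/
noncomputable def bellCoeff (k n : ℕ) : ℝ := bellk k n / n !

/-- The exponential generating function of the order-`k` Bell numbers. -/
noncomputable def bellSeries (k : ℕ) : ℝ⟦X⟧ := PowerSeries.mk (bellCoeff k)

theorem bellCoeff_pos (k n : ℕ) : 0 < bellCoeff k n :=
  div_pos (mod_cast bellk_pos k n) (mod_cast n.factorial_pos)

theorem natCast_bellk (k n : ℕ) : (bellk k n : ℝ) = n ! * bellCoeff k n :=
  (mul_div_cancel₀ _ (Nat.cast_ne_zero.2 n.factorial_ne_zero)).symm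

theorem one_div_factorial_le_bellCoeff (k n : ℕ) : 1 / (n ! : ℝ) ≤ bellCoeff k n :=
  div_le_div_of_nonneg_right (mod_cast bellk_pos k n) (Nat.cast_nonneg _)

theorem bellCoeff_zero_left (n : ℕ) : bellCoeff 0 n = 1 / n ! := by
  rw [bellCoeff, bellk_zero_left, Nat.cast_one]

theorem bellCoeff_zero_right (k : ℕ) : bellCoeff k 0 = 1 := by
  simp [bellCoeff, bellk_zero_right]

theorem succ_mul_bellCoeff_succ (k n : ℕ) : (n + 1) * bellCoeff (k + 1) (n + 1) =
    ∑ ij ∈ antidiagonal n, (ij.1 + 1) * bellCoeff k (ij.1 + 1) * bellCoeff (k + 1) ij.2 := by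
  rw [Finset.Nat.sum_antidiagonal_eq_sum_range_succ_mk, bellCoeff, bellk_succ_succ, Nat.cast_sum,
    sum_div, mul_sum]
  refine sum_congr rfl fun i hi => ?_
  have hin : i ≤ n := Nat.lt_succ_iff.1 (mem_range.1 hi)
  simp only [bellCoeff, Nat.cast_mul, Nat.cast_choose ℝ hin, Nat.factorial_succ, Nat.cast_add_one]
  have := n.factorial_ne_zero
  have := i.factorial_ne_zero
  have := (n - i).factorial_ne_zero
  field_simp

theorem derivative_bellSeries_succ (k : ℕ) :
    d⁄dX ℝ (bellSeries (k + 1)) = d⁄dX ℝ (bellSeries k) * bellSeries (k + 1) := by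
  ext n
  simp only [PowerSeries.coeff_derivative, PowerSeries.coeff_mul, bellSeries,
    PowerSeries.coeff_mk]
  rw [mul_comm, succ_mul_bellCoeff_succ]
  simp only [mul_comm]

/-! ### Truncations of power series with nonnegative coefficients -/

section Truncation

variable {f g : ℝ⟦X⟧} {x : ℝ}

theorem eval_trunc (f : ℝ⟦X⟧) (n : ℕ) (x : ℝ) :
    (trunc n f).eval x = ∑ i ∈ range n, coeff i f * x ^ i :=
  eval₂_trunc_eq_sum_range x (RingHom.id ℝ) n f

theorem eval_trunc_coe_le {P : ℝ[X]} (hP : ∀ i, 0 ≤ P.coeff i) (hx : 0 ≤ x) (n : ℕ) :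
    (trunc n (P : ℝ⟦X⟧)).eval x ≤ P.eval x := by
  rw [eval_trunc, eval_eq_sum_range' (n := max n (P.natDegree + 1)) (by lia)]
  simp only [Polynomial.coeff_coe]
  exact sum_le_sum_of_subset_of_nonneg (range_subset_range.2 (le_max_left _ _))
    fun i _ _ => mul_nonneg (hP i) (pow_nonneg hx i)

theorem coeff_trunc_nonneg (hf : ∀ i, 0 ≤ coeff i f) (n i : ℕ) : 0 ≤ (trunc n f).coeff i := by
  rw [coeff_trunc]
  split_ifs
  exacts [hf i, le_rfl]

theorem eval_trunc_nonneg (hf : ∀ i, 0 ≤ coeff i f) (hx : 0 ≤ x) (n : ℕ) :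
    0 ≤ (trunc n f).eval x := by
  rw [eval_trunc]
  exact sum_nonneg fun i _ => mul_nonneg (hf i) (pow_nonneg hx i)

theorem eval_trunc_mono (hf : ∀ i, 0 ≤ coeff i f) (hx : 0 ≤ x) {m n : ℕ} (hmn : m ≤ n) :
    (trunc m f).eval x ≤ (trunc n f).eval x := by
  rw [eval_trunc, eval_trunc]
  exact sum_le_sum_of_subset_of_nonneg (range_subset_range.2 hmn)
    fun i _ _ => mul_nonneg (hf i) (pow_nonneg hx i)

theorem eval_trunc_mul_le (hf : ∀ i, 0 ≤ coeff i f) (hg : ∀ i, 0 ≤ coeff i g) (hx : 0 ≤ x)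
    (n : ℕ) : (trunc n (f * g)).eval x ≤ (trunc n f).eval x * (trunc n g).eval x := by
  rw [← trunc_trunc_mul_trunc, ← Polynomial.coe_mul, ← eval_mul]
  refine eval_trunc_coe_le (fun i => ?_) hx n
  rw [Polynomial.coeff_mul]
  exact sum_nonneg fun ij _ => mul_nonneg (coeff_trunc_nonneg hf _ _) (coeff_trunc_nonneg hg _ _)

/-- Truncating the differential equation `g' = f' g` leaves a differential inequality. -/
theorem eval_trunc_le_exp_of_derivative_eq (hf : ∀ i, 0 ≤ coeff i f) (hg : ∀ i, 0 ≤ coeff i g)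
    (hfg : d⁄dX ℝ g = d⁄dX ℝ f * g) (hx : 0 ≤ x) (n : ℕ) :
    (trunc (n + 1) g).eval x ≤ coeff 0 g * exp ((trunc (n + 1) f).eval x - coeff 0 f) := by
  set F := trunc (n + 1) f with hF
  set G := trunc (n + 1) g with hG
  have hf' (i) : 0 ≤ coeff i (d⁄dX ℝ f) := by
    rw [PowerSeries.coeff_derivative]
    exact mul_nonneg (hf _) (by positivity)
  have hle {y : ℝ} (hy : 0 ≤ y) : G.derivative.eval y ≤ F.derivative.eval y * G.eval y := by
    rw [hF, hG, ← trunc_derivative, ← trunc_derivative, hfg]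
    exact (eval_trunc_mul_le hf' hg hy n).trans
      (mul_le_mul_of_nonneg_left (eval_trunc_mono hg hy n.le_succ) (eval_trunc_nonneg hf' hy n))
  have hderiv (y : ℝ) : HasDerivAt (fun y => G.eval y * exp (-F.eval y))
      (G.derivative.eval y * exp (-F.eval y) +
        G.eval y * (exp (-F.eval y) * -F.derivative.eval y)) y :=
    (G.hasDerivAt y).mul (F.hasDerivAt y).neg.exp
  have hanti : AntitoneOn (fun y => G.eval y * exp (-F.eval y)) (Set.Ici 0) := by
    refine antitoneOn_of_hasDerivWithinAt_nonpos (convex_Ici 0)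
      (fun y _ => (hderiv y).continuousAt.continuousWithinAt)
      (fun y _ => (hderiv y).hasDerivWithinAt) fun y hy => ?_
    rw [interior_Ici] at hy
    nlinarith [hle (le_of_lt hy), exp_pos (-F.eval y)]
  have h0 := hanti Set.self_mem_Ici hx hx
  have hzero (h : ℝ⟦X⟧) : (trunc (n + 1) h).eval 0 = coeff 0 h := by
    simp [eval_trunc, sum_range_succ']
  simp only [hF, hG, hzero] at h0 ⊢
  rwa [exp_neg, ← div_eq_mul_inv, div_le_iff₀ (exp_pos _), mul_assoc, ← exp_add,
    neg_add_eq_sub] at h0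

end Truncation

/-! ### Upper bound -/

/-- The map `x ↦ eˣ - 1`, whose iterates are the exponential generating functions of the
higher-order Bell numbers, up to the constant term. -/
noncomputable def expSubOne (x : ℝ) : ℝ := exp x - 1

/-- The tower `e ^ e ^ ⋯ ^ e` of height `n`; `tower 0 = 1`. -/
noncomputable def tower (n : ℕ) : ℝ := exp^[n] 1

theorem tower_succ (n : ℕ) : tower (n + 1) = exp (tower n) :=
  iterate_succ_apply' _ _ _

theorem natCast_add_one_le_tower (n : ℕ) : n + 1 ≤ tower n := by
  induction n with
  | zero => simp [tower]
  | succ n ih =>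
    rw [tower_succ, Nat.cast_succ]
    exact (add_le_add_left ih 1).trans (add_one_le_exp _)

theorem one_le_tower (n : ℕ) : 1 ≤ tower n :=
  (le_add_of_nonneg_left n.cast_nonneg).trans (natCast_add_one_le_tower n)

theorem expSubOne_mono : Monotone expSubOne :=
  fun _ _ h => sub_le_sub_right (exp_le_exp.2 h) 1

theorem iterate_expSubOne_one_le_tower (n : ℕ) : expSubOne^[n] 1 ≤ tower n :=
  expSubOne_mono.iterate_le_of_le (g := exp) (fun _ => sub_le_self _ zero_le_one) n 1

theorem iterate_expSubOne_le_div {x : ℝ} (hx : 0 ≤ x) {n : ℕ} (hn : n * x < 1) :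
    expSubOne^[n] x ≤ x / (1 - n * x) := by
  induction n with
  | zero => simp
  | succ n ih =>
    push_cast at hn ⊢
    have hn' : n * x < 1 := by linarith
    have hden : 0 < 1 - n * x := sub_pos.2 hn'
    have hlt : x / (1 - n * x) < 1 := by rw [div_lt_one hden]; linarith
    rw [iterate_succ_apply']
    refine (expSubOne_mono (ih hn')).trans ((sub_le_sub_right
      (exp_bound_div_one_sub_of_interval (div_nonneg hx hden.le) hlt) 1).trans_eq ?_)
    have hsucc : 1 - x / (1 - n * x) = (1 - (n + 1) * x) / (1 - n * x) := by
      rw [eq_div_iff hden.ne', sub_mul, div_mul_cancel₀ _ hden.ne']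
      ring
    rw [hsucc, one_div_div, div_sub_one (sub_pos.2 hn).ne']
    ring

theorem expSubOne_mul_le {t : ℝ} (ht : 0 ≤ t) (ht1 : t ≤ 1) (y : ℝ) :
    expSubOne (t * y) ≤ t * expSubOne y := by
  have := convexOn_exp.2 (Set.mem_univ y) (Set.mem_univ 0) ht (sub_nonneg.2 ht1)
    (add_sub_cancel t 1)
  simp only [smul_eq_mul, mul_zero, add_zero, exp_zero] at this
  rw [expSubOne, expSubOne]
  linarith

theorem iterate_expSubOne_mul_le {t : ℝ} (ht : 0 ≤ t) (ht1 : t ≤ 1) (y : ℝ) (n : ℕ) :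
    expSubOne^[n] (t * y) ≤ t * expSubOne^[n] y := by
  induction n with
  | zero => rfl
  | succ n ih =>
    rw [iterate_succ_apply', iterate_succ_apply']
    exact (expSubOne_mono ih).trans (expSubOne_mul_le ht ht1 _)

theorem coeff_bellSeries_nonneg (k i : ℕ) : 0 ≤ PowerSeries.coeff i (bellSeries k) := by
  rw [bellSeries, PowerSeries.coeff_mk]
  exact (bellCoeff_pos k i).le

theorem coeff_zero_bellSeries (k : ℕ) : PowerSeries.coeff 0 (bellSeries k) = 1 := by
  rw [bellSeries, PowerSeries.coeff_mk, bellCoeff_zero_right]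

theorem eval_trunc_bellSeries_le {x : ℝ} (hx : 0 ≤ x) (k n : ℕ) :
    (trunc (n + 1) (bellSeries k)).eval x ≤ 1 + expSubOne^[k + 1] x := by
  induction k with
  | zero =>
    have h := sum_le_exp_of_nonneg hx (n + 1)
    simpa [eval_trunc, bellSeries, bellCoeff_zero_left, expSubOne, div_eq_inv_mul] using h
  | succ k ih =>
    have h := eval_trunc_le_exp_of_derivative_eq (coeff_bellSeries_nonneg k)
      (coeff_bellSeries_nonneg (k + 1)) (derivative_bellSeries_succ k) hx n
    rw [coeff_zero_bellSeries, coeff_zero_bellSeries, one_mul] at h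
    rw [iterate_succ_apply', expSubOne, add_sub_cancel]
    exact h.trans (exp_le_exp.2 (sub_le_iff_le_add'.2 ih))

theorem bellCoeff_mul_pow_le {p : ℕ} (hp : p ≠ 0) (k : ℕ) {x : ℝ} (hx : 0 ≤ x) :
    bellCoeff k p * x ^ p ≤ expSubOne^[k + 1] x := by
  have h := eval_trunc_bellSeries_le hx k p
  have hterm (i : ℕ) : 0 ≤ bellCoeff k i * x ^ i :=
    mul_nonneg (bellCoeff_pos k i).le (pow_nonneg hx i)
  have h0 : bellCoeff k 0 * x ^ 0 ≤ ∑ i ∈ range p, bellCoeff k i * x ^ i :=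
    single_le_sum (fun i _ => hterm i) (mem_range.2 hp.pos)
  simp only [eval_trunc, sum_range_succ, bellSeries, PowerSeries.coeff_mk] at h
  rw [bellCoeff_zero_right, pow_zero, mul_one] at h0
  linarith

theorem iterate_expSubOne_add_le {N : ℕ} (hN : N ≠ 0) (n : ℕ) :
    expSubOne^[n + N] (1 / (2 * N)) ≤ (N : ℝ)⁻¹ * tower n := by
  have : (0 : ℝ) < N := mod_cast hN.pos
  have hN1 : (N : ℝ)⁻¹ ≤ 1 := inv_le_one_of_one_le₀ (mod_cast hN.pos)
  have hhalf : N * (1 / (2 * N) : ℝ) = 1 / 2 := by field_simp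
  have hfirst : expSubOne^[N] (1 / (2 * N)) ≤ (N : ℝ)⁻¹ * 1 := by
    refine (iterate_expSubOne_le_div (by positivity) ?_).trans_eq ?_
    · rw [hhalf]; norm_num
    · rw [hhalf]; field_simp; norm_num
  calc expSubOne^[n + N] (1 / (2 * N))
      ≤ expSubOne^[n] ((N : ℝ)⁻¹ * 1) := by
        rw [iterate_add_apply]
        exact expSubOne_mono.iterate _ hfirst
    _ ≤ (N : ℝ)⁻¹ * expSubOne^[n] 1 := iterate_expSubOne_mul_le (by positivity) hN1 1 n
    _ ≤ (N : ℝ)⁻¹ * tower n := by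
      gcongr
      exact iterate_expSubOne_one_le_tower n

theorem bellk_le {n N p : ℕ} (hN : N ≠ 0) (hp : tower n ≤ p) :
    (bellk (n + N) p : ℝ) ≤ (2 * exp 1 * p) ^ p * N ^ (p - 1) := by
  have hp0 : p ≠ 0 := by
    rintro rfl
    exact absurd ((one_le_tower n).trans hp) (by norm_num)
  have : (0 : ℝ) < N := mod_cast hN.pos
  have hcoeff : bellCoeff (n + N) p * (1 / (2 * N) : ℝ) ^ p ≤ (N : ℝ)⁻¹ * exp p := calc
    _ ≤ expSubOne^[n + 1 + N] (1 / (2 * N)) := by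
      rw [add_right_comm]
      exact bellCoeff_mul_pow_le hp0 _ (by positivity)
    _ ≤ (N : ℝ)⁻¹ * tower (n + 1) := iterate_expSubOne_add_le hN _
    _ ≤ (N : ℝ)⁻¹ * exp p := by
      rw [tower_succ]
      gcongr
  have hfact : (p ! : ℝ) ≤ (p : ℝ) ^ p := mod_cast p.factorial_le_pow
  have hpow : (N : ℝ) ^ p = N ^ (p - 1) * N := (pow_sub_one_mul hp0 _).symm
  calc (bellk (n + N) p : ℝ)
      = p ! * (bellCoeff (n + N) p * (1 / (2 * N) : ℝ) ^ p) * (2 * N) ^ p := by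
        rw [natCast_bellk, mul_assoc, mul_assoc, ← mul_pow, one_div_mul_cancel (by positivity),
          one_pow, mul_one]
    _ ≤ p ^ p * ((N : ℝ)⁻¹ * exp p) * (2 * N) ^ p := by
      have := bellCoeff_pos (n + N) p
      have : 0 ≤ bellCoeff (n + N) p * (1 / (2 * N) : ℝ) ^ p := by positivity
      gcongr
    _ = (2 * exp 1 * p) ^ p * N ^ (p - 1) := by
      rw [mul_pow 2 (N : ℝ), hpow, mul_pow, mul_pow, ← exp_one_pow p]; field_simp

/-! ### Iterated logarithms and towers -/

theorem exists_iterLog_le_one_iff {x : ℝ} (hx : 0 < x) (n : ℕ) :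
    (∃ j ≤ n, iterLog j x ≤ 1) ↔ x ≤ tower n := by
  induction n generalizing x with
  | zero => simp [iterLog, tower]
  | succ n ih =>
    rcases le_or_gt x 1 with hx1 | hx1
    · exact iff_of_true ⟨0, n.succ.zero_le, hx1⟩ (hx1.trans (one_le_tower _))
    · rw [tower_succ, ← log_le_iff_le_exp hx, ← ih (log_pos hx1)]
      constructor
      · rintro ⟨_ | j, hj, hle⟩
        · exact absurd hle hx1.not_ge
        · exact ⟨j, Nat.succ_le_succ_iff.1 hj, hle⟩
      · rintro ⟨j, hj, hle⟩
        exact ⟨j + 1, Nat.succ_le_succ hj, hle⟩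

theorem logStar_le_iff {x : ℝ} (hx : 0 < x) {n : ℕ} : logStar x ≤ n ↔ x ≤ tower n := by
  rw [← exists_iterLog_le_one_iff hx]
  have hne : {j | iterLog j x ≤ 1}.Nonempty := by
    obtain ⟨m, hm⟩ := exists_nat_ge x
    obtain ⟨j, -, hj⟩ := (exists_iterLog_le_one_iff hx m).2
      (hm.trans ((le_add_of_nonneg_right zero_le_one).trans (natCast_add_one_le_tower m)))
    exact ⟨j, hj⟩
  exact ⟨fun h => ⟨logStar x, h, Nat.sInf_mem hne⟩, fun ⟨_, hj, hle⟩ => (Nat.sInf_le hle).trans hj⟩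

/-! ### Lower bound -/

theorem mul_bellCoeff_mul_bellCoeff_le (k q : ℕ) {m : ℕ} (hm : m ≠ 0) :
    m * bellCoeff k m * bellCoeff (k + 1) q ≤ (q + m : ℕ) * bellCoeff (k + 1) (q + m) := by
  obtain ⟨i, rfl⟩ := Nat.exists_eq_add_one_of_ne_zero hm
  rw [← add_assoc, Nat.cast_succ, Nat.cast_succ, succ_mul_bellCoeff_succ]
  have hmem : (i, q) ∈ antidiagonal (q + i) := by simp [add_comm]
  refine single_le_sum (f := fun ij : ℕ × ℕ =>
    (ij.1 + 1) * bellCoeff k (ij.1 + 1) * bellCoeff (k + 1) ij.2) (fun ij _ => ?_)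
    hmem
  have := bellCoeff_pos k (ij.1 + 1)
  have := bellCoeff_pos (k + 1) ij.2
  positivity

theorem bellCoeff_le_bellCoeff_succ (k n : ℕ) : bellCoeff k n ≤ bellCoeff (k + 1) n := by
  rcases eq_or_ne n 0 with rfl | hn
  · rw [bellCoeff_zero_right, bellCoeff_zero_right]
  · have h := mul_bellCoeff_mul_bellCoeff_le k 0 hn
    rw [bellCoeff_zero_right, mul_one, zero_add] at h
    exact le_of_mul_le_mul_left h (mod_cast hn.pos)

theorem bellCoeff_div_pow_div_factorial_le (k : ℕ) {m r s P : ℕ} (hm : m ≠ 0)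
    (hP : m * r + s ≤ P) :
    (bellCoeff k m / P) ^ r / s ! ≤ bellCoeff (k + 1) (m * r + s) := by
  induction r with
  | zero => simpa using one_div_factorial_le_bellCoeff (k + 1) s
  | succ r ih =>
    have hsplit := mul_bellCoeff_mul_bellCoeff_le k (m * r + s) hm
    rw [show m * r + s + m = m * (r + 1) + s by ring] at hsplit
    have hP' : m * r + s ≤ P := le_trans (by gcongr; lia) hP
    have hP0 : (0 : ℝ) < P := mod_cast (by positivity : 0 < m * (r + 1) + s).trans_le hP
    have hm1 : (1 : ℝ) ≤ m := mod_cast hm.pos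
    have := bellCoeff_pos k m
    have := bellCoeff_pos (k + 1) (m * r + s)
    have := bellCoeff_pos (k + 1) (m * (r + 1) + s)
    calc (bellCoeff k m / P) ^ (r + 1) / s !
        = 1 * bellCoeff k m * ((bellCoeff k m / P) ^ r / s !) / P := by ring
      _ ≤ m * bellCoeff k m * bellCoeff (k + 1) (m * r + s) / P := by gcongr; exact ih hP'
      _ ≤ P * bellCoeff (k + 1) (m * (r + 1) + s) / P := by
        exact div_le_div_of_nonneg_right (hsplit.trans (by gcongr)) hP0.le
      _ = bellCoeff (k + 1) (m * (r + 1) + s) := mul_div_cancel_left₀ _ hP0.ne'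

theorem descFactorial_add_le (n i j : ℕ) :
    n.descFactorial (i + j) ≤ n.descFactorial i * n.descFactorial j := by
  induction j with
  | zero => simp
  | succ j ih =>
    calc n.descFactorial (i + (j + 1))
        = (n - (i + j)) * n.descFactorial (i + j) := Nat.descFactorial_succ n (i + j)
      _ ≤ (n - j) * (n.descFactorial i * n.descFactorial j) := Nat.mul_le_mul (by lia) ih
      _ = n.descFactorial i * n.descFactorial (j + 1) := by rw [Nat.descFactorial_succ]; ring

theorem descFactorial_add_div_two_pow_le (n i j : ℕ) :
    (n.descFactorial (i + j) : ℝ) / 2 ^ (i + j) ≤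
      n.descFactorial i / 2 ^ i * (n.descFactorial j / 2 ^ j) := by
  rw [div_mul_div_comm, ← pow_add]
  gcongr
  exact_mod_cast descFactorial_add_le n i j

theorem succ_descFactorial_succ_eq_add (n r : ℕ) :
    (n + 1).descFactorial (r + 1) = n.descFactorial (r + 1) + (r + 1) * n.descFactorial r := by
  rw [Nat.succ_descFactorial_succ, Nat.descFactorial_succ, ← add_mul]
  rcases le_or_gt r n with h | h
  · congr 1
    lia
  · rw [Nat.descFactorial_of_lt h, mul_zero, mul_zero]

theorem sum_antidiagonal_fst_add_one (n : ℕ) :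
    ∑ ij ∈ antidiagonal n, ((ij.1 : ℝ) + 1) = (n + 1) * (n + 2) / 2 := by
  induction n with
  | zero => simp
  | succ n ih =>
    rw [Finset.Nat.sum_antidiagonal_succ', ih]
    push_cast
    ring

/-- The left-hand side counts hierarchies whose coarsest level is `⊤` and in which distinct levels
merge one pair of classes each. -/
theorem descFactorial_div_two_pow_le_bellCoeff (k P : ℕ) :
    (k.descFactorial P : ℝ) / 2 ^ P ≤ bellCoeff k (P + 1) := by
  induction k generalizing P with
  | zero =>
    cases P with
    | zero => simp [bellCoeff_zero_left]
    | succ P => simpa using (bellCoeff_pos 0 (P + 2)).le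
  | succ k ih =>
    cases P with
    | zero => simpa using one_div_factorial_le_bellCoeff (k + 1) 1
    | succ P =>
      have hterm (ij : ℕ × ℕ) (hij : ij ∈ antidiagonal P) :
          (ij.1 + 1) * ((k.descFactorial P : ℝ) / 2 ^ P) ≤
            (ij.1 + 1) * bellCoeff k (ij.1 + 1) * bellCoeff (k + 1) (ij.2 + 1) := by
        rw [mul_assoc, ← mem_antidiagonal.1 hij]
        gcongr
        exact (descFactorial_add_div_two_pow_le k ij.1 ij.2).trans (mul_le_mul (ih _)
          ((ih _).trans (bellCoeff_le_bellCoeff_succ _ _)) (by positivity) (bellCoeff_pos _ _).le)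
      have hsum := sum_le_sum hterm
      have hrec := succ_mul_bellCoeff_succ k (P + 1)
      rw [← sum_mul, sum_antidiagonal_fst_add_one] at hsum
      rw [Finset.Nat.sum_antidiagonal_succ', bellCoeff_zero_right, mul_one] at hrec
      calc ((k + 1).descFactorial (P + 1) : ℝ) / 2 ^ (P + 1)
          = k.descFactorial (P + 1) / 2 ^ (P + 1) +
              (P + 1) * (P + 2) / 2 * (k.descFactorial P / 2 ^ P) / (P + 2) := by
            rw [succ_descFactorial_succ_eq_add]
            push_cast
            field_simp
            ring
        _ ≤ bellCoeff k (P + 2) + (∑ ij ∈ antidiagonal P,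
              (ij.1 + 1) * bellCoeff k (ij.1 + 1) * bellCoeff (k + 1) (ij.2 + 1)) / (P + 2) := by
            gcongr
            exact ih (P + 1)
        _ = bellCoeff (k + 1) (P + 2) := by
            push_cast at hrec
            field_simp
            linarith

theorem div_exp_one_pow_le_descFactorial {n r : ℕ} (hr : r ≤ n) :
    ((n : ℝ) / exp 1) ^ r ≤ n.descFactorial r := by
  induction n generalizing r with
  | zero => simp [Nat.le_zero.1 hr]
  | succ n ih =>
    rcases r with _ | r
    · simp
    have hrn : r ≤ n := Nat.succ_le_succ_iff.1 hr
    have hratio : ((n : ℝ) + 1) ^ r ≤ exp 1 * n ^ r := by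
      rcases n.eq_zero_or_pos with rfl | hn
      · simp [Nat.le_zero.1 hrn]
      have hn : (0 : ℝ) < n := mod_cast hn
      calc ((n : ℝ) + 1) ^ r = (1 / n + 1) ^ r * n ^ r := by rw [← mul_pow]; field_simp; ring
        _ ≤ exp (1 / n) ^ r * n ^ r := by gcongr; exact add_one_le_exp _
        _ ≤ exp 1 * n ^ r := by
          rw [← exp_nat_mul, mul_one_div]
          gcongr
          exact div_le_one_of_le₀ (mod_cast hrn) hn.le
    rw [Nat.succ_descFactorial_succ]
    push_cast
    calc (((n : ℝ) + 1) / exp 1) ^ (r + 1)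
        = (n + 1) * ((n + 1) ^ r / exp 1) / exp 1 ^ r := by rw [div_pow]; field_simp; ring
      _ ≤ (n + 1) * n ^ r / exp 1 ^ r := by gcongr; exact (div_le_iff₀' (exp_pos 1)).2 hratio
      _ = (n + 1) * (n / exp 1) ^ r := by rw [div_pow]; ring
      _ ≤ (n + 1) * n.descFactorial r := by gcongr; exact ih hrn

theorem div_pow_le_bellCoeff {k P : ℕ} (hP : P ≤ k) :
    (k / (2 * exp 1)) ^ P ≤ bellCoeff k (P + 1) := by
  refine le_trans ?_ (descFactorial_div_two_pow_le_bellCoeff k P)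
  rw [mul_comm, ← div_div, div_pow]
  gcongr
  exact div_exp_one_pow_le_descFactorial hP

section Blocks

variable {k m p N : ℕ} {c : ℝ}

theorem pow_mul_pow_le_bellCoeff_of_le (hc : 0 ≤ c) (hc' : c ≤ exp (-2)) (hp : p ≠ 0)
    (hpN : p ≤ N) (hNk : N ≤ k) : c ^ p * N ^ (p - 1) ≤ bellCoeff k p := by
  obtain ⟨P, rfl⟩ := Nat.exists_eq_add_one_of_ne_zero hp
  have hce : c ≤ 1 / (2 * exp 1) := by
    rw [le_div_iff₀ (by positivity)]
    calc c * (2 * exp 1) ≤ exp (-2) * (exp 1 * exp 1) := by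
          gcongr
          exact exp_one_gt_two.le
      _ = 1 := by rw [← exp_add, ← exp_add]; norm_num
  calc c ^ (P + 1) * N ^ P ≤ c ^ P * k ^ P := by
        gcongr ?_ * ?_ ^ P
        · exact pow_le_pow_of_le_one hc (hc'.trans (exp_le_one_iff.2 (by norm_num))) P.le_succ
        · exact_mod_cast hNk
    _ ≤ (k / (2 * exp 1)) ^ P := by
      rw [← mul_pow, div_eq_inv_mul, ← one_div]
      gcongr
    _ ≤ bellCoeff k (P + 1) := div_pow_le_bellCoeff (by lia)

theorem pow_mul_pow_le_bellCoeff_of_mul_sq_le_one (hc : 0 ≤ c) (hcp : c * p ^ 2 ≤ 1)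
    (hNp : N ≤ p) (hN : N ≠ 0) : c ^ p * N ^ (p - 1) ≤ bellCoeff k p := by
  have hN1 : (1 : ℝ) ≤ N := mod_cast hN.pos
  have hNp' : (N : ℝ) ≤ p := mod_cast hNp
  have hp : (0 : ℝ) < p := by linarith
  calc c ^ p * N ^ (p - 1) ≤ c ^ p * p ^ p := by
        gcongr
        exact (pow_le_pow_right₀ hN1 (p.sub_le 1)).trans (by gcongr)
    _ ≤ (1 / p) ^ p := by
      rw [← mul_pow]
      gcongr
      rw [le_div_iff₀ hp, mul_assoc, ← sq]
      exact hcp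
    _ ≤ 1 / p ! := by
      rw [one_div_pow]
      gcongr
      exact_mod_cast p.factorial_le_pow
    _ ≤ bellCoeff k p := one_div_factorial_le_bellCoeff k p

theorem pow_mul_pow_le_mul_bellCoeff_succ (hc : 0 ≤ c) (hc' : c ≤ 1) (hm : m ≠ 0) (hN : N ≠ 0)
    (hNp : N ≤ p) (hbound : c ^ m * N ^ (m - 1) ≤ bellCoeff k m) :
    c ^ p * N ^ (p - 1) ≤ p ^ (2 * (p / m + p % m)) * bellCoeff (k + 1) p := by
  have hdiv : m * (p / m) + p % m = p := Nat.div_add_mod p m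
  set r := p / m
  set s := p % m
  have hN1 : (1 : ℝ) ≤ N := mod_cast hN.pos
  have hp : (0 : ℝ) < p := mod_cast hN.pos.trans_le hNp
  have hblock := bellCoeff_div_pow_div_factorial_le k hm hdiv.le
  rw [hdiv, div_pow, div_div, div_le_iff₀ (by positivity)] at hblock
  have hfact : (s ! : ℝ) ≤ p ^ s := mod_cast s.factorial_le_pow.trans (by gcongr; lia)
  have hexp : p - 1 ≤ (m - 1) * r + (r + s) := by
    have : (m - 1) * r + r = m * r := by
      rw [← Nat.succ_mul, Nat.succ_eq_add_one, Nat.sub_add_cancel hm.pos]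
    lia
  have := bellCoeff_pos k m
  have := bellCoeff_pos (k + 1) p
  calc c ^ p * N ^ (p - 1)
      ≤ c ^ (m * r) * N ^ ((m - 1) * r + (r + s)) := mul_le_mul
        (pow_le_pow_of_le_one hc hc' (by lia)) (pow_le_pow_right₀ hN1 hexp) (by positivity)
        (by positivity)
    _ = (c ^ m * N ^ (m - 1)) ^ r * N ^ (r + s) := by ring
    _ ≤ bellCoeff k m ^ r * p ^ (r + s) := by gcongr
    _ ≤ bellCoeff (k + 1) p * (p ^ r * p ^ s) * p ^ (r + s) := by
      gcongr
      exact hblock.trans (by gcongr)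
    _ = p ^ (2 * (r + s)) * bellCoeff (k + 1) p := by ring

theorem pow_div_add_mod_le_exp (hp : 2 ≤ p) (hlog : log p ^ 2 ≤ m) (hmp : m ^ 2 ≤ p) :
    (p : ℝ) ^ (2 * (p / m + p % m)) ≤ exp (4 / log p) ^ p := by
  have : (0 : ℝ) < p := by positivity
  have hlogpos : 0 < log p := log_pos (mod_cast hp)
  have hm : 0 < m := Nat.cast_pos.1 ((pow_pos hlogpos 2).trans_le hlog)
  have hcount : (p / m + p % m) * m ≤ 2 * p := by
    have := Nat.div_mul_le_self p m
    have := Nat.mul_le_mul_right m (Nat.mod_lt p hm).le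
    lia
  rw [← exp_nat_mul, ← log_le_iff_le_exp (by positivity), log_pow, mul_div_assoc',
    le_div_iff₀ hlogpos]
  calc ((2 * (p / m + p % m) : ℕ) : ℝ) * log p * log p
      = 2 * ((p / m + p % m : ℕ) * log p ^ 2) := by push_cast; ring
    _ ≤ 2 * ((p / m + p % m : ℕ) * m) := by gcongr
    _ ≤ 2 * (2 * p : ℕ) := by gcongr; exact_mod_cast hcount
    _ = p * 4 := by push_cast; ring

end Blocks

/-- The constant of the inductive lower bound. The slack `4 / log p` pays for the losses
`exp (4 / log p)` of all later steps because `log p` at least halves in each of them; `38` makes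
the constant at most `exp (-32)`, which covers `p ≤ exp 16`. -/
noncomputable def lowerConst (p : ℕ) : ℝ := exp (4 / log p - 38)

theorem lowerConst_pos (p : ℕ) : 0 < lowerConst p := exp_pos _

theorem exp_neg_le_lowerConst (p : ℕ) : exp (-38) ≤ lowerConst p := by
  rw [lowerConst, exp_le_exp, neg_le_sub_iff_le_add, le_add_iff_nonneg_left]
  exact div_nonneg zero_le_four (log_natCast_nonneg p)

theorem lowerConst_le {p : ℕ} (hp : 2 ≤ p) : lowerConst p ≤ exp (-32) := by
  have hlog : 2 / 3 ≤ log p := by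
    have := log_two_gt_d9
    have : log 2 ≤ log p := log_le_log two_pos (mod_cast hp)
    linarith
  have : 4 / log p ≤ 6 := by
    rw [div_le_iff₀ (by linarith)]
    linarith
  exact exp_le_exp.2 (by linarith)

theorem lowerConst_mul_exp_le {m p : ℕ} (hm : 2 ≤ m) (hmp : m ^ 2 ≤ p) :
    lowerConst p * exp (4 / log p) ≤ lowerConst m := by
  have hlogm : 0 < log m := log_pos (mod_cast hm)
  have hlog : 2 * log m ≤ log p := by
    have h : log ((m : ℝ) ^ 2) ≤ log p := log_le_log (by positivity) (mod_cast hmp)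
    rwa [log_pow] at h
  have hhalf : 4 / log p ≤ 4 / (2 * log m) := by gcongr
  have hsplit : 4 / (2 * log m) * 2 = 4 / log m := by field_simp
  rw [lowerConst, lowerConst, ← exp_add, exp_le_exp]
  linarith

theorem natCeil_sq_sq_le_exp {u : ℝ} (hu : 16 ≤ u) : (⌈u ^ 2⌉₊ : ℝ) ^ 2 ≤ exp u := by
  have hceil : (⌈u ^ 2⌉₊ : ℝ) ≤ u ^ 2 + 1 := (Nat.ceil_lt_add_one (sq_nonneg u)).le
  have hexp : u ^ 2 + 1 ≤ exp (u / 2) := by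
    refine le_trans ?_ (pow_div_factorial_le_exp (u / 2) (by linarith) 5)
    have hcube : 16 ^ 3 * u ^ 2 ≤ u ^ 3 * u ^ 2 := by gcongr
    norm_num [Nat.factorial, div_pow]
    nlinarith
  calc (⌈u ^ 2⌉₊ : ℝ) ^ 2 ≤ exp (u / 2) ^ 2 := by gcongr; exact hceil.trans hexp
    _ = exp u := by rw [← exp_nat_mul]; congr 1; push_cast; ring

theorem log_natCeil_sq_le {t u : ℝ} (ht : 1 ≤ t) (hu : 1 ≤ u) (hut : u ≤ 8 * exp t) :
    log ⌈u ^ 2⌉₊ ≤ 8 * t := by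
  have hceil : (⌈u ^ 2⌉₊ : ℝ) ≤ u ^ 2 + 1 := (Nat.ceil_lt_add_one (sq_nonneg u)).le
  have hpos : (0 : ℝ) < ⌈u ^ 2⌉₊ := Nat.cast_pos.2 (Nat.ceil_pos.2 (by positivity))
  rw [log_le_iff_le_exp hpos]
  have hconst : 128 ≤ exp (6 * t) := calc
    (128 : ℝ) ≤ 2.7 ^ 6 := by norm_num
    _ ≤ exp 1 ^ 6 := by gcongr; linarith [exp_one_gt_d9]
    _ ≤ exp (6 * t) := by rw [← exp_nat_mul, exp_le_exp]; push_cast; linarith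
  calc (⌈u ^ 2⌉₊ : ℝ) ≤ u ^ 2 + 1 := hceil
    _ ≤ 2 * u ^ 2 := by nlinarith
    _ ≤ 2 * (8 * exp t) ^ 2 := by gcongr
    _ = 128 * exp (2 * t) := by rw [two_mul t, exp_add]; ring
    _ ≤ exp (6 * t) * exp (2 * t) := by gcongr
    _ = exp (8 * t) := by rw [← exp_add]; ring_nf

theorem lowerConst_pow_mul_pow_le_bellCoeff_of_le_or {N k p : ℕ} (hN : N ≠ 0) (hNk : N ≤ k)
    (hp : 2 ≤ p) (h : p ≤ N ∨ log p ≤ 16) :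
    lowerConst p ^ p * N ^ (p - 1) ≤ bellCoeff k p := by
  have hpos := (lowerConst_pos p).le
  have hle := lowerConst_le hp
  rcases le_or_gt p N with hpN | hNp
  · exact pow_mul_pow_le_bellCoeff_of_le hpos (hle.trans (exp_le_exp.2 (by norm_num)))
      (by lia) hpN hNk
  · refine pow_mul_pow_le_bellCoeff_of_mul_sq_le_one hpos ?_ hNp.le hN
    have hexp : (p : ℝ) ≤ exp 16 :=
      (log_le_iff_le_exp (by positivity)).1 (h.resolve_left hNp.not_ge)
    calc lowerConst p * p ^ 2 ≤ exp (-32) * exp 16 ^ 2 := by gcongr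
      _ = 1 := by rw [← exp_nat_mul, ← exp_add]; norm_num

theorem lowerConst_pow_mul_pow_le_bellCoeff {N j k p : ℕ} (hN : N ≠ 0) (hk : j + N ≤ k)
    (hp : 2 ≤ p) (hlog : log p ≤ 8 * tower j) :
    lowerConst p ^ p * N ^ (p - 1) ≤ bellCoeff k p := by
  induction j generalizing k p with
  | zero =>
    rw [tower, iterate_zero_apply] at hlog
    exact lowerConst_pow_mul_pow_le_bellCoeff_of_le_or hN (by lia) hp (.inr (by linarith))
  | succ j ih =>
    by_cases hbase : p ≤ N ∨ log p ≤ 16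
    · exact lowerConst_pow_mul_pow_le_bellCoeff_of_le_or hN (by lia) hp hbase
    push Not at hbase
    obtain ⟨hNp, hlog16⟩ := hbase
    obtain ⟨k, rfl⟩ := Nat.exists_eq_add_one_of_ne_zero (show k ≠ 0 by lia)
    have : (0 : ℝ) < p := by positivity
    set m := ⌈log p ^ 2⌉₊
    have hlogm : log p ^ 2 ≤ m := Nat.le_ceil _
    have hm : 2 ≤ m := by
      have : (2 : ℝ) ≤ m := by nlinarith
      exact_mod_cast this
    have hmp : m ^ 2 ≤ p := by
      have : (m : ℝ) ^ 2 ≤ p := (natCeil_sq_sq_le_exp hlog16.le).trans_eq (exp_log (by positivity))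
      exact_mod_cast this
    have hlogm' : log m ≤ 8 * tower j :=
      log_natCeil_sq_le (one_le_tower j) (by linarith) (by rwa [tower_succ] at hlog)
    have hc := lowerConst_mul_exp_le hm hmp
    have hc0 : 0 ≤ lowerConst p * exp (4 / log p) := (mul_pos (lowerConst_pos p) (exp_pos _)).le
    have hc1 : lowerConst p * exp (4 / log p) ≤ 1 :=
      hc.trans ((lowerConst_le hm).trans (exp_le_one_iff.2 (by norm_num)))
    have hsucc := pow_mul_pow_le_mul_bellCoeff_succ hc0 hc1 (by lia) hN hNp.le
      (le_trans (by gcongr) (ih (by lia : j + N ≤ k) hm hlogm'))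
    refine le_of_mul_le_mul_left ?_ (pow_pos (exp_pos (4 / log p)) p)
    calc exp (4 / log p) ^ p * (lowerConst p ^ p * N ^ (p - 1))
        = (lowerConst p * exp (4 / log p)) ^ p * N ^ (p - 1) := by ring
      _ ≤ p ^ (2 * (p / m + p % m)) * bellCoeff (k + 1) p := hsucc
      _ ≤ exp (4 / log p) ^ p * bellCoeff (k + 1) p :=
        mul_le_mul_of_nonneg_right (pow_div_add_mod_le_exp hp hlogm hmp) (bellCoeff_pos _ _).le

theorem le_bellk {n N p : ℕ} (hN : N ≠ 0) (hp : 2 ≤ p) (hpn : p ≤ tower (n + 1)) :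
    (exp (-39) * p) ^ p * N ^ (p - 1) ≤ bellk (n + N) p := by
  have hlog : log p ≤ 8 * tower n := by
    have : log p ≤ tower n := (log_le_iff_le_exp (by positivity)).2 (hpn.trans_eq (tower_succ n))
    linarith [one_le_tower n]
  have hfact : ((p : ℝ) / exp 1) ^ p ≤ p ! := by
    simpa only [Nat.descFactorial_self] using div_exp_one_pow_le_descFactorial (le_refl p)
  calc (exp (-39) * p) ^ p * N ^ (p - 1)
      = (p / exp 1) ^ p * (exp (-38) ^ p * N ^ (p - 1)) := by
        rw [show (-39 : ℝ) = -38 - 1 by norm_num, exp_sub]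
        ring
    _ ≤ p ! * (lowerConst p ^ p * N ^ (p - 1)) := by
      gcongr
      exact exp_neg_le_lowerConst p
    _ ≤ p ! * bellCoeff (n + N) p := by
      gcongr
      exact lowerConst_pow_mul_pow_le_bellCoeff hN le_rfl hp hlog
    _ = bellk (n + N) p := (natCast_bellk _ _).symm

theorem rpow_one_sub_one_div_pow {x : ℝ} (hx : 0 ≤ x) {p : ℕ} (hp : p ≠ 0) :
    (x ^ (1 - 1 / (p : ℝ))) ^ p = x ^ (p - 1) := by
  rw [← rpow_mul_natCast hx, ← rpow_natCast x, Nat.cast_pred hp.pos]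
  congr 1
  field_simp

theorem mul_rpow_le_rpow_of_mul_pow_le {a b x : ℝ} {p : ℕ} (hp : p ≠ 0) (ha : 0 ≤ a) (hx : 0 ≤ x)
    (h : a ^ p * x ^ (p - 1) ≤ b) : a * x ^ (1 - 1 / (p : ℝ)) ≤ b ^ (1 / (p : ℝ)) := by
  have hb : 0 ≤ b := (by positivity : 0 ≤ a ^ p * x ^ (p - 1)).trans h
  rw [one_div, le_rpow_inv_iff_of_pos (by positivity) hb (by positivity), ← one_div, rpow_natCast,
    mul_pow, rpow_one_sub_one_div_pow hx hp]
  exact h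

theorem rpow_le_mul_rpow_of_le_mul_pow {a b x : ℝ} {p : ℕ} (hp : p ≠ 0) (ha : 0 ≤ a) (hx : 0 ≤ x)
    (hb : 0 ≤ b) (h : b ≤ a ^ p * x ^ (p - 1)) :
    b ^ (1 / (p : ℝ)) ≤ a * x ^ (1 - 1 / (p : ℝ)) := by
  rw [one_div, rpow_inv_le_iff_of_pos hb (by positivity) (by positivity), ← one_div, rpow_natCast,
    mul_pow, rpow_one_sub_one_div_pow hx hp]
  exact h

/-- There are absolute constants `0 < c ≤ C` such that for every
integer `p ≥ 2` and every integer `k > k₀ := log* p − 1`,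
`c · p · (k − k₀)^{1−1/p} ≤ bell_k(p)^{1/p} ≤ C · p · (k − k₀)^{1−1/p}`. -/
theorem bellk_asymptotics_large_k :
    ∃ c C : ℝ, 0 < c ∧ c ≤ C ∧
      ∀ p : ℕ, 2 ≤ p → ∀ k : ℕ, logStar p - 1 < k →
        c * p * ((k - (logStar p - 1) : ℕ) : ℝ) ^ (1 - 1 / (p : ℝ)) ≤
          (bellk k p : ℝ) ^ (1 / (p : ℝ)) ∧
        (bellk k p : ℝ) ^ (1 / (p : ℝ)) ≤
          C * p * ((k - (logStar p - 1) : ℕ) : ℝ) ^ (1 - 1 / (p : ℝ)) := by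
  refine ⟨exp (-39), 2 * exp 1, exp_pos _, ?_, fun p hp k hk => ?_⟩
  · linarith [exp_le_exp.2 (show (-39 : ℝ) ≤ 1 by norm_num), exp_pos 1]
  have hp0 : (0 : ℝ) < p := by positivity
  have hp1 : (1 : ℝ) < p := mod_cast hp
  have hstar : logStar p - 1 + 1 = logStar p := by
    have h0 : ¬ logStar p ≤ 0 := by simpa [logStar_le_iff hp0, tower] using hp1
    lia
  obtain ⟨n, hn⟩ : ∃ n, n = logStar p - 1 := ⟨_, rfl⟩
  rw [← hn] at hk hstar ⊢
  obtain ⟨N, rfl⟩ := Nat.exists_eq_add_of_le hk.le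
  have hN : N ≠ 0 := by lia
  have hlower : tower n ≤ p := (not_le.1 (mt (logStar_le_iff hp0).2 (by lia))).le
  have hupper : p ≤ tower (n + 1) := (logStar_le_iff hp0).1 hstar.ge
  rw [Nat.add_sub_cancel_left]
  exact ⟨mul_rpow_le_rpow_of_mul_pow_le (by lia) (by positivity) N.cast_nonneg
      (le_bellk hN hp hupper),
    rpow_le_mul_rpow_of_le_mul_pow (by lia) (by positivity) N.cast_nonneg (by positivity)
      (bellk_le hN hlower)⟩
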